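/- Orthogonal transformations act on Clifford tori by transforming the parameters: let p, q be pure unit quaternions and l, r unit quaternions. Then { (conj l) * x * r : x ∈ 𝕋_p^q } = 𝕋_{(conj l) * p * l}^{(conj r) * q * r}, and { conj x : x ∈ 𝕋_p^q } = 𝕋_q^p. -/

import Mathlib

/-!
The geodesic distance on `S³` is a function of the inner product, so a linear isometry `f` of `ℍ`
carries the torus of `(p, q)` onto that of `(p', q')` as soon as it carries the circles `K p q` and
`K p (-q)` onto `K p' q'` and `K p' (-q')`. For a unit quaternion `x`, membership in `K p q` says
that `x` intertwines `q` and `p`, that is `x * q = p * x`; this relation is transported by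
multiplication with unit quaternions on either side, and by inversion, which is conjugation on `S³`.
-/

open Quaternion RealInnerProductSpace

/-- The great circle `K_p^q`: the set of unit quaternions `x` with
`(conj x) * p * x = q`. -/
def K (p q : Quaternion ℝ) : Set (Quaternion ℝ) :=
  {x : Quaternion ℝ | ‖x‖ = 1 ∧ star x * p * x = q}

/-- The geodesic (angular) distance from a point `x` of `S³` to a subset `A` of `S³`:
`d(x, A) = inf_{y ∈ A} arccos ⟪x, y⟫`. -/
noncomputable def sdist (x : Quaternion ℝ) (A : Set (Quaternion ℝ)) : ℝ :=
  sInf ((fun y => Real.arccos ⟪x, y⟫) '' A)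

/-- The Clifford torus `𝕋_p^q`: the points of `S³` equidistant from the two
absolutely orthogonal great circles `K_p^q` and `K_p^{-q}`. -/
noncomputable def CT (p q : Quaternion ℝ) : Set (Quaternion ℝ) :=
  {x : Quaternion ℝ | ‖x‖ = 1 ∧ sdist x (K p q) = sdist x (K p (-q))}

lemma mem_unitary_iff_norm_eq_one {x : ℍ[ℝ]} : x ∈ unitary ℍ[ℝ] ↔ ‖x‖ = 1 :=
  ⟨CStarRing.norm_of_mem_unitary, fun hx => by
    simp [Unitary.mem_iff, star_mul_self, self_mul_star, normSq_eq_norm_mul_self, hx]⟩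

lemma star_eq_inv_of_norm_eq_one {x : ℍ[ℝ]} (hx : ‖x‖ = 1) : star x = x⁻¹ :=
  eq_inv_of_mul_eq_one_left (Unitary.star_mul_self_of_mem (mem_unitary_iff_norm_eq_one.2 hx))

lemma mem_K_iff_semiconjBy {p q x : ℍ[ℝ]} : x ∈ K p q ↔ ‖x‖ = 1 ∧ SemiconjBy x q p := by
  refine and_congr_right fun hx => ?_
  have hx₀ : x ≠ 0 := norm_ne_zero_iff.1 (hx ▸ one_ne_zero)
  rw [star_eq_inv_of_norm_eq_one hx, mul_assoc, inv_mul_eq_iff_eq_mul₀ hx₀, SemiconjBy, eq_comm]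

lemma K_neg_left (p q : ℍ[ℝ]) : K (-p) q = K p (-q) := by
  ext x
  rw [mem_K_iff_semiconjBy, mem_K_iff_semiconjBy, ← SemiconjBy.neg_right_iff, neg_neg]

lemma sdist_image (f : ℍ[ℝ] →ₗᵢ[ℝ] ℍ[ℝ]) (x : ℍ[ℝ]) (A : Set ℍ[ℝ]) :
    sdist (f x) (f '' A) = sdist x A := by
  simp only [sdist, Set.image_image, f.inner_map_map]

lemma image_CT {f : ℍ[ℝ] ≃ₗᵢ[ℝ] ℍ[ℝ]} {p q p' q' : ℍ[ℝ]}
    (hpos : f '' K p q = K p' q') (hneg : f '' K p (-q) = K p' (-q')) :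
    f '' CT p q = CT p' q' := by
  have sdist_map (x : ℍ[ℝ]) (A : Set ℍ[ℝ]) : sdist (f x) (f '' A) = sdist x A :=
    sdist_image f.toLinearIsometry x A
  have mem_CT_iff (x : ℍ[ℝ]) : x ∈ CT p q ↔ f x ∈ CT p' q' := by
    simp only [CT, Set.mem_ofPred_eq, f.norm_map, ← hpos, ← hneg, sdist_map]
  exact (f.toEquiv.eq_preimage_iff_image_eq _ _).1 (Set.ext mem_CT_iff)

/-- The rotation `x ↦ star l * x * r` of `ℍ = ℝ⁴` attached to a pair of unit quaternions, which are
encoded as elements of `unitary ℍ`. -/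
noncomputable def unitaryRotation (l r : unitary ℍ[ℝ]) : ℍ[ℝ] ≃ₗᵢ[ℝ] ℍ[ℝ] :=
  (Unitary.mulLeft ℝ ℍ[ℝ] (star l)).trans (Unitary.mulRight ℝ r)

lemma unitaryRotation_apply (l r : unitary ℍ[ℝ]) (x : ℍ[ℝ]) :
    unitaryRotation l r x = star (l : ℍ[ℝ]) * x * r :=
  rfl

lemma unitaryRotation_mul_unitaryRotation (l m r : unitary ℍ[ℝ]) (x y : ℍ[ℝ]) :
    unitaryRotation l m x * unitaryRotation m r y = unitaryRotation l r (x * y) := by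
  simp only [unitaryRotation_apply]
  calc star (l : ℍ[ℝ]) * x * m * (star (m : ℍ[ℝ]) * y * r)
      = star (l : ℍ[ℝ]) * x * (m * star (m : ℍ[ℝ])) * y * r := by simp only [mul_assoc]
    _ = star (l : ℍ[ℝ]) * (x * y) * r := by
      rw [Unitary.mul_star_self_of_mem m.2, mul_one, mul_assoc (star (l : ℍ[ℝ]))]

lemma unitaryRotation_mem_K_iff {p q x : ℍ[ℝ]} (l r : unitary ℍ[ℝ]) :
    unitaryRotation l r x ∈ K (unitaryRotation l l p) (unitaryRotation r r q) ↔ x ∈ K p q := by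
  simp only [mem_K_iff_semiconjBy, LinearIsometryEquiv.norm_map, SemiconjBy,
    unitaryRotation_mul_unitaryRotation, (unitaryRotation l r).injective.eq_iff]

lemma image_unitaryRotation_K (p q : ℍ[ℝ]) (l r : unitary ℍ[ℝ]) :
    unitaryRotation l r '' K p q = K (unitaryRotation l l p) (unitaryRotation r r q) :=
  ((unitaryRotation l r).toEquiv.eq_preimage_iff_image_eq _ _).1
    (Set.ext fun _ => (unitaryRotation_mem_K_iff l r).symm)

lemma image_unitaryRotation_CT (p q : ℍ[ℝ]) (l r : unitary ℍ[ℝ]) :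
    unitaryRotation l r '' CT p q = CT (unitaryRotation l l p) (unitaryRotation r r q) :=
  image_CT (image_unitaryRotation_K p q l r) (by rw [image_unitaryRotation_K, map_neg])

/-- Quaternion conjugation as a real linear isometry. -/
noncomputable def conjIsometry : ℍ[ℝ] ≃ₗᵢ[ℝ] ℍ[ℝ] where
  __ := starAddEquiv
  map_smul' := Quaternion.star_smul
  norm_map' := Quaternion.norm_star

lemma star_mem_K_iff {p q x : ℍ[ℝ]} : star x ∈ K q p ↔ x ∈ K p q := by
  rw [mem_K_iff_semiconjBy, mem_K_iff_semiconjBy, Quaternion.norm_star]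
  refine and_congr_right fun hx => ?_
  rw [star_eq_inv_of_norm_eq_one hx, SemiconjBy.inv_symm_left_iff₀]

lemma image_conjIsometry_K (p q : ℍ[ℝ]) : conjIsometry '' K p q = K q p :=
  (conjIsometry.toEquiv.eq_preimage_iff_image_eq _ _).1 (Set.ext fun _ => star_mem_K_iff.symm)

lemma image_conjIsometry_CT (p q : ℍ[ℝ]) : conjIsometry '' CT p q = CT q p :=
  image_CT (image_conjIsometry_K p q) (by rw [image_conjIsometry_K, K_neg_left])

theorem statement19 (p q l r : Quaternion ℝ)
    (hp : p.re = 0) (hpn : ‖p‖ = 1) (hq : q.re = 0) (hqn : ‖q‖ = 1)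
    (hl : ‖l‖ = 1) (hr : ‖r‖ = 1) :
    (fun x : Quaternion ℝ => star l * x * r) '' CT p q
        = CT (star l * p * l) (star r * q * r) ∧
    (fun x : Quaternion ℝ => star x) '' CT p q = CT q p := by
  have hl' : l ∈ unitary ℍ[ℝ] := mem_unitary_iff_norm_eq_one.2 hl
  have hr' : r ∈ unitary ℍ[ℝ] := mem_unitary_iff_norm_eq_one.2 hr
  exact ⟨image_unitaryRotation_CT p q ⟨l, hl'⟩ ⟨r, hr'⟩, image_conjIsometry_CT p q⟩
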